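/- Let p ∈ ℤ[x] be irreducible over ℚ of degree e ≥ 2 and let ρ(n) = #{v ∈ ℤ/nℤ : p(v) ≡ 0 (mod n)}. Then there exists a constant D ≥ 1, depending only on p, such that ρ(m·n) ≤ D·ρ(m)·ρ(n) for all positive integers m and n. -/

import Mathlib

/-- The number of roots of the integer polynomial `P` modulo `n`. -/
noncomputable def rho (P : Polynomial ℤ) (n : ℕ) : ℕ :=
  Nat.card {v : ZMod n // Polynomial.aeval v P = 0}

/-!
Clearing denominators in a Bézout identity for `P` and `P'` over `ℚ` gives `A * P + B * P' = r` over
`ℤ` with `r ≠ 0`. If `x` and `y` are roots of `P` modulo `m * n` that agree modulo `m` and modulo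
`n`, then `(x - y) ^ 2 = 0`, so the Taylor expansion of `P` at `y` stops at first order and gives
`P'(y) * (x - y) = 0`. Evaluating the Bézout identity at `y` turns this into `r * (x - y) = 0`,
which leaves at most `|r|` values of `x` for each `y`.
-/

open Polynomial

section Bezout

variable {R S : Type*} [CommRing R] [CommRing S] [Algebra R S] (M : Submonoid R)
  [IsLocalization M S]

theorem exists_mem_mul_add_mul_eq_of_isCoprime_algebraMap {x y : R}
    (h : IsCoprime (algebraMap R S x) (algebraMap R S y)) :
    ∃ r ∈ M, ∃ a b : R, a * x + b * y = r := by
  have htop : (Ideal.span {x, y}).map (algebraMap R S) = ⊤ := by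
    rw [Ideal.map_span, Set.image_pair, Ideal.eq_top_iff_one, Ideal.mem_span_pair]
    exact h
  obtain ⟨r, hrM, hr⟩ := Set.not_disjoint_iff.mp fun hdisj ↦
    (IsLocalization.map_algebraMap_ne_top_iff_disjoint M S (Ideal.span {x, y})).mpr hdisj htop
  exact ⟨r, hrM, Ideal.mem_span_pair.mp hr⟩

attribute [local instance] Polynomial.algebra Polynomial.isLocalization in
theorem exists_mem_mul_add_mul_eq_C_of_isCoprime_map {f g : R[X]}
    (h : IsCoprime (f.map (algebraMap R S)) (g.map (algebraMap R S))) :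
    ∃ r ∈ M, ∃ a b : R[X], a * f + b * g = C r := by
  obtain ⟨_, ⟨r, hr, rfl⟩, hbezout⟩ :=
    exists_mem_mul_add_mul_eq_of_isCoprime_algebraMap (S := S[X]) (M.map C) h
  exact ⟨r, hr, hbezout⟩

end Bezout

section Counting

variable {G β : Type*} [AddGroup G]

theorem ncard_le_ncard_mul_ncard_of_sub_mem {s k : Set G} {t : Set β} {f : G → β}
    (hf : Set.MapsTo f s t) (hsub : ∀ x ∈ s, ∀ y ∈ s, f x = f y → x - y ∈ k)
    (hk : k.Finite) (ht : t.Finite) : s.ncard ≤ k.ncard * t.ncard := by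
  let base (b : β) : G := Function.invFunOn f s b
  have hbase (x : G) (hx : x ∈ s) : base (f x) ∈ s ∧ f (base (f x)) = f x :=
    ⟨Function.invFunOn_mem ⟨x, hx, rfl⟩, Function.invFunOn_eq ⟨x, hx, rfl⟩⟩
  rw [← Set.ncard_prod]
  refine Set.ncard_le_ncard_of_injOn (fun x ↦ (x - base (f x), f x)) (fun x hx ↦ ?_)
    (fun x _ y _ hxy ↦ ?_) (hk.prod ht)
  · exact ⟨hsub x hx _ (hbase x hx).1 (hbase x hx).2.symm, hf hx⟩
  · obtain ⟨hdiff, hfxy⟩ := Prod.mk.inj hxy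
    rw [hfxy] at hdiff
    exact sub_left_injective hdiff

theorem ncard_zsmul_eq_zero_le [Finite G] [IsAddCyclic G] {r : ℤ} (hr : r ≠ 0) :
    {x : G | r • x = 0}.ncard ≤ r.natAbs := by
  classical
  have := Fintype.ofFinite G
  simpa [Set.ncard_eq_toFinset_card'] using
    IsAddCyclic.card_nsmul_eq_zero_le (α := G) (Int.natAbs_pos.mpr hr)

end Counting

section ZeroSet

variable {R : Type*} [CommRing R]

/-- The zeros of `P : R[X]` in the `R`-algebra `S`. Unlike `Polynomial.rootSet`, it is meaningful
when `S` has zero divisors. -/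
def zeroSet (P : R[X]) (S : Type*) [CommRing S] [Algebra R S] : Set S :=
  {x | aeval x P = 0}

variable {S T : Type*} [CommRing S] [CommRing T] [Algebra R S] [Algebra R T] {P : R[X]}

theorem mapsTo_zeroSet (f : S →ₐ[R] T) : Set.MapsTo f (zeroSet P S) (zeroSet P T) := by
  intro x (hx : aeval x P = 0)
  change aeval (f x) P = 0
  rw [aeval_algHom_apply, hx, map_zero]

theorem zeroSet_prod : zeroSet P (S × T) = zeroSet P S ×ˢ zeroSet P T := by
  ext x
  simp [zeroSet, aeval_prod_apply]

theorem smul_sub_eq_zero_of_mem_zeroSet {A B : R[X]} {r : R}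
    (hbezout : A * P + B * derivative P = C r) {x y : S} (hx : x ∈ zeroSet P S)
    (hy : y ∈ zeroSet P S) (hsq : (x - y) ^ 2 = 0) : r • (x - y) = 0 := by
  change aeval x P = 0 at hx
  change aeval y P = 0 at hy
  have htaylor : aeval y (derivative P) * (x - y) = 0 := by
    simpa [hx, hy] using (aeval_add_of_sq_eq_zero P y (x - y) hsq).symm
  have hr : aeval y B * aeval y (derivative P) = algebraMap R S r := by
    simpa [hy] using congrArg (aeval y) hbezout
  rw [Algebra.smul_def, ← hr, mul_assoc, htaylor, mul_zero]

theorem ncard_zeroSet_le_of_sq_eq_zero [Finite S] [Finite T] {A B : R[X]} {r : R}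
    (hbezout : A * P + B * derivative P = C r) (f : S →ₐ[R] T)
    (hf : ∀ x, f x = 0 → x ^ 2 = 0) :
    (zeroSet P S).ncard ≤ {x : S | r • x = 0}.ncard * (zeroSet P T).ncard := by
  refine ncard_le_ncard_mul_ncard_of_sub_mem (mapsTo_zeroSet f) (fun x hx y hy hxy ↦ ?_)
    (Set.toFinite _) (Set.toFinite _)
  exact smul_sub_eq_zero_of_mem_zeroSet hbezout hx hy <| hf _ <| by rw [map_sub, hxy, sub_self]

end ZeroSet

section ZMod

theorem mul_dvd_lcm_sq (m n : ℕ) : m * n ∣ m.lcm n ^ 2 := by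
  rw [sq]
  exact mul_dvd_mul (Nat.dvd_lcm_left m n) (Nat.dvd_lcm_right m n)

theorem sq_eq_zero_of_castHom_eq_zero {T : Type*} [Ring T] {k l : ℕ} [CharP T k] (hkl : k ∣ l)
    (hlk : l ∣ k ^ 2) {x : ZMod l} (hx : ZMod.castHom hkl T x = 0) : x ^ 2 = 0 := by
  obtain ⟨z, rfl⟩ := ZMod.intCast_surjective x
  rw [map_intCast, CharP.intCast_eq_zero_iff T k] at hx
  rw [← Int.cast_pow, ZMod.intCast_zmod_eq_zero_iff_dvd]
  calc (l : ℤ) ∣ (k : ℤ) ^ 2 := mod_cast hlk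
    _ ∣ z ^ 2 := pow_dvd_pow_of_dvd hx 2

theorem rho_eq_ncard_zeroSet (P : ℤ[X]) (n : ℕ) : rho P n = (zeroSet P (ZMod n)).ncard := rfl

theorem rho_mul_le {P A B : ℤ[X]} {r : ℤ} (hr : r ≠ 0)
    (hbezout : A * P + B * derivative P = C r) (m n : ℕ) [NeZero m] [NeZero n] :
    rho P (m * n) ≤ r.natAbs * (rho P m * rho P n) := by
  let f : ZMod (m * n) →ₐ[ℤ] ZMod m × ZMod n :=
    (ZMod.castHom (Nat.lcm_dvd_mul m n) (ZMod m × ZMod n)).toIntAlgHom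
  have hf (x : ZMod (m * n)) (hx : f x = 0) : x ^ 2 = 0 :=
    sq_eq_zero_of_castHom_eq_zero (Nat.lcm_dvd_mul m n) (mul_dvd_lcm_sq m n) hx
  simp only [rho_eq_ncard_zeroSet, ← Set.ncard_prod, ← zeroSet_prod]
  calc (zeroSet P (ZMod (m * n))).ncard
      ≤ {x : ZMod (m * n) | r • x = 0}.ncard * (zeroSet P (ZMod m × ZMod n)).ncard :=
        ncard_zeroSet_le_of_sq_eq_zero hbezout f hf
    _ ≤ r.natAbs * (zeroSet P (ZMod m × ZMod n)).ncard :=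
        Nat.mul_le_mul_right _ (ncard_zsmul_eq_zero_le hr)

end ZMod

theorem rho_submultiplicative_general (P : ℤ[X])
    (hsep : (P.map (Int.castRingHom ℚ)).Separable) :
    ∃ D : ℝ, 1 ≤ D ∧ ∀ m n : ℕ, 1 ≤ m → 1 ≤ n →
      (rho P (m * n) : ℝ) ≤ D * rho P m * rho P n := by
  rw [separable_def, derivative_map] at hsep
  obtain ⟨r, hr, A, B, hbezout⟩ :=
    exists_mem_mul_add_mul_eq_C_of_isCoprime_map (nonZeroDivisors ℤ) hsep
  have hr0 : r ≠ 0 := nonZeroDivisors.ne_zero hr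
  refine ⟨r.natAbs, mod_cast Int.natAbs_pos.mpr hr0, fun m n hm hn ↦ ?_⟩
  have : NeZero m := .of_pos hm
  have : NeZero n := .of_pos hn
  rw [mul_assoc]
  exact_mod_cast rho_mul_le hr0 hbezout m n

/-- for `P ∈ ℤ[x]` irreducible over `ℚ` of degree `≥ 2`, there is a constant
`D ≥ 1`, depending only on `P`, with `ρ(mn) ≤ D·ρ(m)·ρ(n)` for all positive integers `m, n`. -/
theorem rho_submultiplicative (P : Polynomial ℤ)
    (hirr : Irreducible (P.map (Int.castRingHom ℚ))) (hdeg : 2 ≤ P.natDegree) :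
    ∃ D : ℝ, 1 ≤ D ∧ ∀ m n : ℕ, 1 ≤ m → 1 ≤ n →
      (rho P (m * n) : ℝ) ≤ D * rho P m * rho P n :=
  rho_submultiplicative_general P hirr.separable
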